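/- Let L > 3 be an odd integer not divisible by 3 such that every prime factor of L is congruent to 5 modulo 8. Then M(L,3) = M^e(L,3) = (L − 1)/4. -/

import Mathlib

open Finset

/-- The set of differences of a codeword `I ⊆ ℤ_L`. -/
def dset {L : ℕ} (I : Finset (ZMod L)) : Finset (ZMod L) :=
  (I ×ˢ I).image fun p => p.1 - p.2

/-- The set of nonzero differences. -/
def dstar {L : ℕ} (I : Finset (ZMod L)) : Finset (ZMod L) := dset I \ {0}

/-- A conflict-avoiding code of length `L` and weight `ω`. -/
def IsCAC (L ω : ℕ) (C : Finset (Finset (ZMod L))) : Prop :=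
  (∀ I ∈ C, I.card = ω) ∧
  ∀ I ∈ C, ∀ J ∈ C, I ≠ J → Disjoint (dstar I) (dstar J)

/-- `M(L,ω)`: the maximum size of a CAC of length `L` and weight `ω`. -/
noncomputable def MCAC (L ω : ℕ) : ℕ :=
  sSup {n | ∃ C : Finset (Finset (ZMod L)), IsCAC L ω C ∧ C.card = n}

/-- An equi-difference codeword of weight three: `I = {0, g, 2g}` for some generator
`1 ≤ g ≤ L/2`. -/
def IsEquiDiff {L : ℕ} (I : Finset (ZMod L)) : Prop :=
  ∃ g : ℕ, 1 ≤ g ∧ 2 * g ≤ L ∧ I = {0, (g : ZMod L), ((2 * g : ℕ) : ZMod L)}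

/-- `M^e(L,ω)`: the maximum size of a CAC of length `L` and weight `ω` all of whose
codewords are equi-difference. -/
noncomputable def MeCAC (L ω : ℕ) : ℕ :=
  sSup {n | ∃ C : Finset (Finset (ZMod L)),
    IsCAC L ω C ∧ (∀ I ∈ C, IsEquiDiff I) ∧ C.card = n}

/-- The leave of a CAC `C` of length `L`: `Λ = ℤ_L \ ⋃_{I ∈ C} d(I)`. -/
def leave {L : ℕ} (C : Finset (Finset (ZMod L))) : Set (ZMod L) :=
  Set.univ \ ⋃ I ∈ C, (dset I : Set (ZMod L))

/-!
For `L` coprime to `6`, a codeword of weight three has at least four nonzero differences: if two of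
its differences coincide up to sign, it is an arithmetic progression, with differences `±d, ±2d`,
and these are distinct. Disjoint difference sets inside the `L - 1` nonzero residues then give the
upper bound `(L - 1) / 4`.

The codeword `{0, g, 2g}` has exactly the differences `±g, ±2g`. These sets partition the nonzero
residues, as `g` runs up to sign over one color class, once the nonzero residues are two-colored
so that negation preserves and doubling switches the color. Modulo a prime `p ≡ 5 (mod 8)`,
quadratic residuosity is such a coloring, because `-1` is a square and `2` is not. Colorings of a
subgroup and of its quotient glue to a coloring of the group, so every finite abelian group whose
order has only such prime factors is colorable, by Cauchy's theorem and induction.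
-/

lemma odd_of_forall_prime_mod_eight_eq_five {n : ℕ}
    (hn : ∀ p : ℕ, p.Prime → p ∣ n → p % 8 = 5) : Odd n := by
  rw [← Nat.not_even_iff_odd, even_iff_two_dvd]
  intro h2
  simpa using hn 2 Nat.prime_two h2

section AddGroup

variable {G : Type*} [AddGroup G]

lemma two_nsmul_bijective (hG : Odd (Nat.card G)) : Function.Bijective fun x : G ↦ 2 • x :=
  (Nat.coprime_two_right.2 hG).nsmul_right_bijective

lemma card_pair_neg_pair [DecidableEq G] {x y : G} (hx : x ≠ -x) (hy : y ≠ -y) (hxy : x ≠ y)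
    (hxy' : x ≠ -y) : ({x, -x, y, -y} : Finset G).card = 4 := by
  have hnxy : -x ≠ y := fun h ↦ hxy' (neg_eq_iff_eq_neg.1 h)
  rw [card_insert_of_notMem (by simp [*]), card_insert_of_notMem (by simp [*]), card_pair hy]

end AddGroup

/-- A two-coloring of the nonzero elements of an abelian group which negation preserves and
doubling switches; `P x` says that `x` has the first color, and `P 0` carries no meaning. -/
structure IsDoublingColoring {G : Type*} [AddCommGroup G] (P : G → Prop) : Prop where
  neg_iff : ∀ x ≠ 0, (P (-x) ↔ P x)
  two_nsmul_iff : ∀ x ≠ 0, (P (2 • x) ↔ ¬ P x)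

namespace IsDoublingColoring

variable {G H : Type*} [AddCommGroup G] [AddCommGroup H]

lemma comp_injective {P : H → Prop} (hP : IsDoublingColoring P) (f : G →+ H)
    (hf : Function.Injective f) : IsDoublingColoring (P ∘ f) where
  neg_iff x hx := by
    simpa using hP.neg_iff (f x) ((map_ne_zero_iff f hf).2 hx)
  two_nsmul_iff x hx := by
    simpa using hP.two_nsmul_iff (f x) ((map_ne_zero_iff f hf).2 hx)

lemma exists_of_quotient {N : AddSubgroup G} (hN : Odd (Nat.card (G ⧸ N)))
    {P : N → Prop} (hP : IsDoublingColoring P) {Q : G ⧸ N → Prop} (hQ : IsDoublingColoring Q) :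
    ∃ R : G → Prop, IsDoublingColoring R := by
  classical
  have two_nsmul_mem_iff (x : G) : 2 • x ∈ N ↔ x ∈ N := by
    simp only [← QuotientAddGroup.eq_zero_iff, QuotientAddGroup.mk_nsmul]
    exact (two_nsmul_bijective hN).1.eq_iff' (smul_zero 2)
  refine ⟨fun x ↦ if hx : x ∈ N then P ⟨x, hx⟩ else Q x, fun x hx ↦ ?_, fun x hx ↦ ?_⟩
  all_goals by_cases hxN : x ∈ N
  · simp only [neg_mem_iff, hxN, dite_true]
    exact hP.neg_iff ⟨x, hxN⟩ (by simpa using hx)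
  · simpa [hxN] using hQ.neg_iff x (by simpa using hxN)
  · simpa [hxN, two_nsmul_mem_iff] using hP.two_nsmul_iff ⟨x, hxN⟩ (by simpa using hx)
  · simpa [hxN, two_nsmul_mem_iff] using hQ.two_nsmul_iff x (by simpa using hxN)

lemma isSquare_of_card_mod_eight_eq_five {F : Type*} [Field F] [Fintype F]
    (hF : Fintype.card F % 8 = 5) :
    IsDoublingColoring (IsSquare : F → Prop) := by
  classical
  have neg_one_isSquare : IsSquare (-1 : F) := FiniteField.isSquare_neg_one_iff.2 (by omega)
  have two_not_isSquare : ¬ IsSquare (2 : F) := by simp [FiniteField.isSquare_two_iff, hF]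
  have neg_isSquare {x : F} (hx : IsSquare x) : IsSquare (-x) := by
    simpa using neg_one_isSquare.mul hx
  refine ⟨fun x _ ↦ ⟨fun h ↦ by simpa using neg_isSquare h, neg_isSquare⟩, fun x hx ↦ ?_⟩
  have two_ne_zero : (2 : F) ≠ 0 := fun h ↦ two_not_isSquare (h ▸ IsSquare.zero)
  rw [nsmul_eq_mul, Nat.cast_ofNat, ← quadraticChar_one_iff_isSquare (mul_ne_zero two_ne_zero hx),
    ← quadraticChar_neg_one_iff_not_isSquare, map_mul,
    quadraticChar_neg_one_iff_not_isSquare.2 two_not_isSquare, neg_one_mul, neg_eq_iff_eq_neg]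

lemma exists_of_prime_card {p : ℕ} (hp : p.Prime) (hp8 : p % 8 = 5) (hG : Nat.card G = p) :
    ∃ P : G → Prop, IsDoublingColoring P := by
  have : Fact p.Prime := ⟨hp⟩
  have e : ZMod p ≃+ G := hG ▸ zmodAddCyclicAddEquiv (isAddCyclic_of_prime_card hG)
  have hZMod : IsDoublingColoring (IsSquare : ZMod p → Prop) :=
    isSquare_of_card_mod_eight_eq_five (by rwa [ZMod.card])
  exact ⟨_, hZMod.comp_injective e.symm.toAddMonoidHom e.symm.injective⟩

theorem exists_of_forall_prime_mod_eight_eq_five [Finite G]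
    (hG : ∀ p : ℕ, p.Prime → p ∣ Nat.card G → p % 8 = 5) :
    ∃ P : G → Prop, IsDoublingColoring P := by
  induction hn : Nat.card G using Nat.strong_induction_on generalizing G with
  | _ n ih =>
  subst hn
  rcases subsingleton_or_nontrivial G with _ | _
  · exact ⟨fun _ ↦ True, fun x hx ↦ (hx (Subsingleton.elim x 0)).elim,
      fun x hx ↦ (hx (Subsingleton.elim x 0)).elim⟩
  obtain ⟨p, hp, hpG⟩ := Nat.exists_prime_and_dvd (Finite.one_lt_card (α := G)).ne'
  have : Fact p.Prime := ⟨hp⟩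
  obtain ⟨g, hg⟩ := exists_prime_addOrderOf_dvd_card' p hpG
  let N := AddSubgroup.zmultiples g
  have card_N : Nat.card N = p := (Nat.card_zmultiples g).trans hg
  have card_G : Nat.card G = Nat.card (G ⧸ N) * p :=
    card_N ▸ N.card_eq_card_quotient_mul_card_addSubgroup
  have card_quotient_lt : Nat.card (G ⧸ N) < Nat.card G :=
    card_G ▸ lt_mul_of_one_lt_right Nat.card_pos hp.one_lt
  have hquot : ∀ q : ℕ, q.Prime → q ∣ Nat.card (G ⧸ N) → q % 8 = 5 :=
    fun q hq hqN ↦ hG q hq (card_G ▸ hqN.mul_right p)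
  obtain ⟨P, hP⟩ := exists_of_prime_card hp (hG p hp hpG) card_N
  obtain ⟨Q, hQ⟩ := ih _ card_quotient_lt hquot rfl
  exact exists_of_quotient (odd_of_forall_prime_mod_eight_eq_five hquot) hP hQ

lemma apply_iff_eq_or_eq_neg {P : G → Prop} (hP : IsDoublingColoring P)
    (h2 : Function.Injective fun x : G ↦ 2 • x) {x z : G} (hx : x ≠ 0) (hPx : P x)
    (hz : z = x ∨ z = -x ∨ z = 2 • x ∨ z = -(2 • x)) : P z ↔ z = x ∨ z = -x := by
  have h2x : 2 • x ≠ 0 := fun h ↦ hx (h2 (h.trans (smul_zero 2).symm))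
  have hPnx : P (-x) := (hP.neg_iff x hx).2 hPx
  have hP2x : ¬ P (2 • x) := fun h ↦ (hP.two_nsmul_iff x hx).1 h hPx
  have hPn2x : ¬ P (-(2 • x)) := fun h ↦ hP2x ((hP.neg_iff _ h2x).1 h)
  refine ⟨fun hPz ↦ ?_, by rintro (rfl | rfl) <;> assumption⟩
  rcases hz with h | h | rfl | rfl
  exacts [.inl h, .inr h, (hP2x hPz).elim, (hPn2x hPz).elim]

lemma eq_or_eq_neg_of_common_multiple {P : G → Prop} (hP : IsDoublingColoring P)
    (h2 : Function.Injective fun x : G ↦ 2 • x) {x y z : G}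
    (hx : x ≠ 0) (hy : y ≠ 0) (hPx : P x) (hPy : P y)
    (hzx : z = x ∨ z = -x ∨ z = 2 • x ∨ z = -(2 • x))
    (hzy : z = y ∨ z = -y ∨ z = 2 • y ∨ z = -(2 • y)) : x = y ∨ x = -y := by
  have eq_or_eq_neg_trans {a b : G} (ha : z = a ∨ z = -a) (hb : z = b ∨ z = -b) :
      a = b ∨ a = -b := by grind
  have hPzx := hP.apply_iff_eq_or_eq_neg h2 hx hPx hzx
  have hPzy := hP.apply_iff_eq_or_eq_neg h2 hy hPy hzy
  by_cases hPz : P z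
  · exact eq_or_eq_neg_trans (hPzx.1 hPz) (hPzy.1 hPz)
  · have hz2x : z = 2 • x ∨ z = -(2 • x) := by tauto
    have hz2y : z = 2 • y ∨ z = -(2 • y) := by tauto
    have two_nsmul_eq := eq_or_eq_neg_trans hz2x hz2y
    rw [← smul_neg] at two_nsmul_eq
    exact two_nsmul_eq.imp (@h2 _ _) (@h2 _ _)

end IsDoublingColoring

section Differences

variable {L : ℕ} {I : Finset (ZMod L)} {x y z : ZMod L}

lemma mem_dstar : z ∈ dstar I ↔ (∃ a ∈ I, ∃ b ∈ I, a - b = z) ∧ z ≠ 0 := by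
  simp [dstar, dset, and_assoc]

lemma sub_mem_dstar (hx : x ∈ I) (hy : y ∈ I) (hxy : x ≠ y) : x - y ∈ dstar I :=
  mem_dstar.2 ⟨⟨x, hx, y, hy, rfl⟩, sub_ne_zero.2 hxy⟩

lemma neg_mem_dstar (hz : z ∈ dstar I) : -z ∈ dstar I := by
  obtain ⟨⟨a, ha, b, hb, rfl⟩, hab⟩ := mem_dstar.1 hz
  exact neg_sub a b ▸ sub_mem_dstar hb ha (sub_ne_zero.1 hab).symm

lemma four_le_card_dstar_of_mem (hodd : Odd L) (hx : x ∈ dstar I) (hy : y ∈ dstar I)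
    (hxy : x ≠ y) (hxy' : x ≠ -y) : 4 ≤ (dstar I).card := by
  rw [← card_pair_neg_pair (ZMod.ne_neg_self hodd (mem_dstar.1 hx).2)
    (ZMod.ne_neg_self hodd (mem_dstar.1 hy).2) hxy hxy']
  apply card_le_card
  simp [insert_subset_iff, hx, hy, neg_mem_dstar]

lemma four_le_card_dstar (hodd : Odd L) (h3 : ¬ 3 ∣ L) (hI : I.card = 3) :
    4 ≤ (dstar I).card := by
  obtain ⟨a, b, c, hab, hac, hbc, rfl⟩ := card_eq_three.1 hI
  have hab_mem : a - b ∈ dstar {a, b, c} := sub_mem_dstar (by simp) (by simp) hab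
  have hac_mem : a - c ∈ dstar {a, b, c} := sub_mem_dstar (by simp) (by simp) hac
  have hbc_mem : b - c ∈ dstar {a, b, c} := sub_mem_dstar (by simp) (by simp) hbc
  by_cases progression : a - b = b - c
  · refine four_le_card_dstar_of_mem hodd hab_mem hac_mem (fun h ↦ hbc ?_) (fun h ↦ hab ?_)
    · linear_combination -h
    · have three_isUnit : IsUnit (3 : ZMod L) := by
        simpa using (ZMod.isUnit_iff_coprime 3 L).2 (Nat.prime_three.coprime_iff_not_dvd.2 h3)
      have three_mul_sub : 3 * (a - b) = 0 := by linear_combination h + progression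
      exact sub_eq_zero.1 (three_isUnit.mul_right_eq_zero.1 three_mul_sub)
  · refine four_le_card_dstar_of_mem hodd hab_mem hbc_mem progression (fun h ↦ hac ?_)
    linear_combination h

theorem IsCAC.card_le [NeZero L] (hodd : Odd L) (h3 : ¬ 3 ∣ L) {C : Finset (Finset (ZMod L))}
    (hC : IsCAC L 3 C) : C.card ≤ (L - 1) / 4 := by
  have biUnion_subset : C.biUnion dstar ⊆ univ.erase 0 := fun z hz ↦ by
    obtain ⟨I, -, hzI⟩ := mem_biUnion.1 hz
    exact mem_erase.2 ⟨(mem_dstar.1 hzI).2, mem_univ z⟩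
  rw [Nat.le_div_iff_mul_le four_pos]
  calc C.card * 4 ≤ ∑ I ∈ C, (dstar I).card :=
        card_nsmul_le_sum _ _ _ fun I hI ↦ four_le_card_dstar hodd h3 (hC.1 I hI)
    _ = (C.biUnion dstar).card := (card_biUnion fun I hI J hJ ↦ hC.2 I hI J hJ).symm
    _ ≤ (univ.erase (0 : ZMod L)).card := card_le_card biUnion_subset
    _ = L - 1 := by rw [card_erase_of_mem (mem_univ _), card_univ, ZMod.card]

end Differences

section EquiDifference

variable {L : ℕ}

lemma two_nsmul_bijective_zmod (hodd : Odd L) : Function.Bijective fun x : ZMod L ↦ 2 • x :=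
  two_nsmul_bijective (by rwa [Nat.card_zmod])

/-- The equi-difference codeword `{0, g, 2g}` generated by the representative `g = ±x` with
`0 ≤ g ≤ L / 2`, so that `x` and `-x` generate the same codeword. -/
def equiDiffCodeword (x : ZMod L) : Finset (ZMod L) :=
  {0, (x.valMinAbs.natAbs : ZMod L), ((2 * x.valMinAbs.natAbs : ℕ) : ZMod L)}

lemma equiDiffCodeword_eq_of_eq_or_eq_neg {x y : ZMod L} (h : x = y ∨ x = -y) :
    equiDiffCodeword x = equiDiffCodeword y := by
  rw [equiDiffCodeword, ZMod.natAbs_valMinAbs_eq_natAbs_valMinAbs.2 h, equiDiffCodeword]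

variable [NeZero L] {x z : ZMod L}

lemma natCast_natAbs_valMinAbs_eq_or (x : ZMod L) :
    (x.valMinAbs.natAbs : ZMod L) = x ∨ (x.valMinAbs.natAbs : ZMod L) = -x := by
  rw [ZMod.natCast_natAbs_valMinAbs]
  exact ite_eq_or_eq _ _ _

lemma isEquiDiff_equiDiffCodeword (hx : x ≠ 0) : IsEquiDiff (equiDiffCodeword x) := by
  have natAbs_pos : 0 < x.valMinAbs.natAbs := by simpa [Nat.pos_iff_ne_zero] using hx
  have natAbs_le := ZMod.natAbs_valMinAbs_le x
  exact ⟨_, natAbs_pos, by omega, rfl⟩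

lemma card_equiDiffCodeword (hodd : Odd L) (hx : x ≠ 0) : (equiDiffCodeword x).card = 3 := by
  have hg : (x.valMinAbs.natAbs : ZMod L) ≠ 0 := by
    rcases natCast_natAbs_valMinAbs_eq_or x with h | h <;> simpa [h] using hx
  have h2g : ((2 * x.valMinAbs.natAbs : ℕ) : ZMod L) ≠ 0 := by
    rwa [two_mul, Nat.cast_add, Ne, ZMod.add_self_eq_zero_iff_eq_zero hodd]
  refine card_eq_three.2 ⟨_, _, _, hg.symm, h2g.symm, fun h ↦ hg ?_, rfl⟩
  push_cast at h
  linear_combination -h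

lemma mem_dstar_equiDiffCodeword (hz : z ≠ 0) :
    z ∈ dstar (equiDiffCodeword x) ↔ z = x ∨ z = -x ∨ z = 2 • x ∨ z = -(2 • x) := by
  simp only [mem_dstar, equiDiffCodeword, mem_insert, mem_singleton, exists_eq_or_imp,
    exists_eq_left, Nat.cast_mul, Nat.cast_ofNat, nsmul_eq_mul]
  rcases natCast_natAbs_valMinAbs_eq_or x with h | h <;> rw [h] <;> grind

lemma card_dstar_equiDiffCodeword_le (x : ZMod L) : (dstar (equiDiffCodeword x)).card ≤ 4 := by
  have subset_four : dstar (equiDiffCodeword x) ⊆ {x, -x, 2 • x, -(2 • x)} := fun z hz ↦ by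
    simpa using (mem_dstar_equiDiffCodeword (mem_dstar.1 hz).2).1 hz
  exact (card_le_card subset_four).trans card_le_four

open Classical in
/-- The code of all equi-difference codewords generated by nonzero elements of color `P`. -/
noncomputable def coloredCode (P : ZMod L → Prop) : Finset (Finset (ZMod L)) :=
  ({x | x ≠ 0 ∧ P x} : Finset (ZMod L)).image equiDiffCodeword

variable {P : ZMod L → Prop} {I : Finset (ZMod L)}

lemma mem_coloredCode : I ∈ coloredCode P ↔ ∃ x, (x ≠ 0 ∧ P x) ∧ equiDiffCodeword x = I := by
  simp [coloredCode]

lemma isEquiDiff_of_mem_coloredCode (hI : I ∈ coloredCode P) : IsEquiDiff I := by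
  obtain ⟨x, ⟨hx, -⟩, rfl⟩ := mem_coloredCode.1 hI
  exact isEquiDiff_equiDiffCodeword hx

lemma IsDoublingColoring.isCAC_coloredCode (hP : IsDoublingColoring P) (hodd : Odd L) :
    IsCAC L 3 (coloredCode P) := by
  refine ⟨fun I hI ↦ ?_, fun I hI J hJ hIJ ↦ ?_⟩
  · obtain ⟨x, ⟨hx, -⟩, rfl⟩ := mem_coloredCode.1 hI
    exact card_equiDiffCodeword hodd hx
  · obtain ⟨x, ⟨hx, hPx⟩, rfl⟩ := mem_coloredCode.1 hI
    obtain ⟨y, ⟨hy, hPy⟩, rfl⟩ := mem_coloredCode.1 hJ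
    refine disjoint_left.2 fun z hzx hzy ↦ hIJ (equiDiffCodeword_eq_of_eq_or_eq_neg ?_)
    have hz : z ≠ 0 := (mem_dstar.1 hzx).2
    exact hP.eq_or_eq_neg_of_common_multiple (two_nsmul_bijective_zmod hodd).1 hx hy hPx hPy
      ((mem_dstar_equiDiffCodeword hz).1 hzx) ((mem_dstar_equiDiffCodeword hz).1 hzy)

lemma IsDoublingColoring.exists_mem_dstar_coloredCode (hP : IsDoublingColoring P) (hodd : Odd L)
    (hz : z ≠ 0) : ∃ I ∈ coloredCode P, z ∈ dstar I := by
  by_cases hPz : P z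
  · exact ⟨_, mem_coloredCode.2 ⟨z, ⟨hz, hPz⟩, rfl⟩, (mem_dstar_equiDiffCodeword hz).2 (.inl rfl)⟩
  · obtain ⟨x, rfl⟩ := (two_nsmul_bijective_zmod hodd).2 z
    have hx : x ≠ 0 := by
      rintro rfl
      exact hz (smul_zero 2)
    have hPx : P x := by simpa using mt (hP.two_nsmul_iff x hx).2 hPz
    exact ⟨_, mem_coloredCode.2 ⟨x, ⟨hx, hPx⟩, rfl⟩, (mem_dstar_equiDiffCodeword hz).2 (by simp)⟩

lemma IsDoublingColoring.le_card_coloredCode (hP : IsDoublingColoring P) (hodd : Odd L) :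
    (L - 1) / 4 ≤ (coloredCode P).card := by
  have subset_biUnion : univ.erase 0 ⊆ (coloredCode P).biUnion dstar := fun z hz ↦
    mem_biUnion.2 (hP.exists_mem_dstar_coloredCode hodd (ne_of_mem_erase hz))
  have card_dstar_le : ∀ I ∈ coloredCode P, (dstar I).card ≤ 4 := fun I hI ↦ by
    obtain ⟨x, -, rfl⟩ := mem_coloredCode.1 hI
    exact card_dstar_equiDiffCodeword_le x
  have four_mul_card : L - 1 ≤ (coloredCode P).card * 4 :=
    calc L - 1 = (univ.erase (0 : ZMod L)).card := by
          rw [card_erase_of_mem (mem_univ _), card_univ, ZMod.card]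
      _ ≤ ((coloredCode P).biUnion dstar).card := card_le_card subset_biUnion
      _ ≤ (coloredCode P).card * 4 := card_biUnion_le_card_mul _ _ _ card_dstar_le
  omega

end EquiDifference

theorem MCAC_all_factors_5_mod_8 (L : ℕ) (hL : 3 < L) (hodd : Odd L) (h3 : ¬ 3 ∣ L)
    (hp : ∀ p : ℕ, p.Prime → p ∣ L → p % 8 = 5) :
    MCAC L 3 = (L - 1) / 4 ∧ MeCAC L 3 = (L - 1) / 4 := by
  have : NeZero L := ⟨by omega⟩
  obtain ⟨P, hP⟩ : ∃ P : ZMod L → Prop, IsDoublingColoring P :=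
    IsDoublingColoring.exists_of_forall_prime_mod_eight_eq_five (by rwa [Nat.card_zmod])
  have hC : IsCAC L 3 (coloredCode P) := hP.isCAC_coloredCode hodd
  have card_eq : (coloredCode P).card = (L - 1) / 4 :=
    (hC.card_le hodd h3).antisymm (hP.le_card_coloredCode hodd)
  constructor
  · refine IsGreatest.csSup_eq ⟨⟨coloredCode P, hC, card_eq⟩, ?_⟩
    rintro _ ⟨D, hD, rfl⟩
    exact hD.card_le hodd h3
  · refine IsGreatest.csSup_eq
      ⟨⟨coloredCode P, hC, fun _ ↦ isEquiDiff_of_mem_coloredCode, card_eq⟩, ?_⟩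
    rintro _ ⟨D, hD, -, rfl⟩
    exact hD.card_le hodd h3
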